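/- Let F_1, …, F_L ∈ M_{N×N}(ℂ) each be block diagonal with blocks of size at most 2, let p = (Φ_{F_L} ∘ ⋯ ∘ Φ_{F_1})(X_1 X_2 ⋯ X_N), and fix a cut position 1 ≤ k < N. Let M be the matrix with rows indexed by tuples (n_1,…,n_k) ∈ {0,…,2^L}^k and columns indexed by tuples (n_{k+1},…,n_N) ∈ {0,…,2^L}^{N−k}, whose entry at ((n_1,…,n_k),(n_{k+1},…,n_N)) is the coefficient of the monomial X_1^{n_1}⋯X_N^{n_N} in p. Then the rank of M is at most ∏_{i=1}^{L} (2^i + 1). (This bounds the Schmidt rank across every cut of the state produced by the depth-L circuit, which is the source of the algorithm's efficiency.) -/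

import Mathlib

open MvPolynomial

/-- The algebra endomorphism `Φ_A` of `ℂ[X_1,…,X_N]` determined by
`Φ_A(X_i) = Σ_j A_{ij} X_j`. -/
noncomputable def Phi {N : ℕ} (A : Matrix (Fin N) (Fin N) ℂ) :
    MvPolynomial (Fin N) ℂ →ₐ[ℂ] MvPolynomial (Fin N) ℂ :=
  aeval fun i => ∑ j, C (A i j) * X j

/-- A matrix `F` is block diagonal with blocks of size at most 2: there is a set `S`
of (0-based) positions, containing no two consecutive integers, such that
`F i j = 0` whenever `i ≠ j` and `{i, j} ≠ {k, k+1}` for every `k ∈ S`. -/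
def BlockDiag2 {N : ℕ} (F : Matrix (Fin N) (Fin N) ℂ) : Prop :=
  ∃ S : Set ℕ, (∀ k ∈ S, k + 1 < N) ∧ (∀ k ∈ S, k + 1 ∉ S) ∧
    ∀ i j : Fin N, i ≠ j →
      (∀ k ∈ S, ¬(((i : ℕ) = k ∧ (j : ℕ) = k + 1) ∨ ((i : ℕ) = k + 1 ∧ (j : ℕ) = k))) →
      F i j = 0

/-!
Across a cut of the ordered variables into a lower set and its complement, the rank of the
coefficient matrix is at most the separation rank of `p`, the least number of products `a * b` with
`a` and `b` in the variables on either side that sum to `p`.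

Let `R_l = ∏_{i=1}^{l} (2^i + 1)`. By induction on the depth `l`, the separation rank is at most
`R_l` across *every* cut. A layer with no block straddling the cut acts on the two sides separately
and preserves the separation rank. If a block straddles the cut just below `x`, then none straddles
the cut just above `x`, so there the separation rank is still at most `R_{l-1}` after the layer;
moving the single variable `X x` to the other side costs a factor equal to its number of possible
exponents, `2^l + 1`. The exponents are at most `2^l` because every column of a layer has at most
two nonzero entries, so that a layer at most doubles them.
-/

section SeparationRank

variable {σ τ K : Type*} [CommSemiring K] {s : Set σ} {R D : ℕ} {q : MvPolynomial σ K} {x : σ}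

/-- The separation rank of `q` across the bipartition `s`, `sᶜ` of the variables is at most `R`:
`q` is a sum of at most `R` products of a polynomial in the variables of `s` and a polynomial in
the variables of `sᶜ`. Over a field this bounds the Schmidt rank of `q`, without reference to
coefficient matrices. -/
def SeparationRankLE (s : Set σ) (R : ℕ) (q : MvPolynomial σ K) : Prop :=
  ∃ (ι : Type) (_ : Fintype ι) (a b : ι → MvPolynomial σ K), Fintype.card ι ≤ R ∧
    (∀ i, a i ∈ supported K s) ∧ (∀ i, b i ∈ supported K sᶜ) ∧ q = ∑ i, a i * b i

theorem SeparationRankLE.mono {R' : ℕ} (hR : R ≤ R') :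
    SeparationRankLE s R q → SeparationRankLE s R' q :=
  fun ⟨ι, hι, a, b, hcard, h⟩ => ⟨ι, hι, a, b, hcard.trans hR, h⟩

theorem X_mem_supported_of_mem (hx : x ∈ s) : X x ∈ supported K s :=
  Algebra.subset_adjoin (Set.mem_image_of_mem X hx)

theorem toMvPolynomial_mem_supported [Fintype τ] {A : Matrix σ τ K} {t : Set τ} {i : σ}
    (hA : ∀ j ∉ t, A i j = 0) : A.toMvPolynomial i ∈ supported K t := by
  refine sum_mem fun j _ => ?_
  rw [← C_mul_X_eq_monomial]
  by_cases hj : j ∈ t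
  · exact mul_mem (Subalgebra.algebraMap_mem _ _) (X_mem_supported_of_mem hj)
  · simp [hA j hj]

theorem separationRankLE_prod_X (s : Set σ) (t : Finset σ) :
    SeparationRankLE s 1 (∏ j ∈ t, X j : MvPolynomial σ K) := by
  classical
  refine ⟨Unit, inferInstance, fun _ => ∏ j ∈ t with j ∈ s, X j, fun _ => ∏ j ∈ t with j ∉ s, X j,
    le_rfl, fun _ => ?_, fun _ => ?_, ?_⟩
  · exact Subalgebra.prod_mem _ fun j hj => X_mem_supported_of_mem (Finset.mem_filter.1 hj).2
  · exact Subalgebra.prod_mem _ fun j hj => X_mem_supported_of_mem (Finset.mem_filter.1 hj).2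
  · rw [Fintype.sum_unique, Finset.prod_filter_mul_prod_filter_not]

theorem coeff_piecewise_mul [DecidablePred (· ∈ s)] {a b : MvPolynomial σ K}
    (ha : a ∈ supported K s) (hb : b ∈ supported K sᶜ) (u : {i // i ∈ s} →₀ ℕ)
    (v : {i // i ∉ s} →₀ ℕ) :
    coeff (u.piecewise v) (a * b) = coeff u.extendDomain a * coeff v.extendDomain b := by
  classical
  rw [coeff_mul, Finset.sum_eq_single (u.extendDomain, v.extendDomain)]
  · rintro ⟨y, z⟩ hyz hne
    by_contra h
    obtain ⟨hy, hz⟩ := ne_zero_and_ne_zero_of_mul h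
    have hy_supp : ∀ i ∉ s, y i = 0 := fun i hi =>
      mem_support_notMem_vars_zero (mem_support_iff.2 hy) fun hv => hi (mem_supported.1 ha hv)
    have hz_supp : ∀ i ∈ s, z i = 0 := fun i hi =>
      mem_support_notMem_vars_zero (mem_support_iff.2 hz) fun hv => mem_supported.1 hb hv hi
    have hsum : ∀ i, y i + z i = u.piecewise v i :=
      DFunLike.congr_fun (Finset.HasAntidiagonal.mem_antidiagonal.1 hyz)
    refine hne (Prod.ext (Finsupp.ext fun i => ?_) (Finsupp.ext fun i => ?_)) <;>
      by_cases hi : i ∈ s <;> have := hsum i <;> simp_all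
  · refine fun h => absurd (Finset.HasAntidiagonal.mem_antidiagonal.2 ?_) h
    ext i
    by_cases hi : i ∈ s <;> simp [hi]

theorem SeparationRankLE.rank_le [StrongRankCondition K] {m n : Type*} [Fintype n]
    [DecidablePred (· ∈ s)] (h : SeparationRankLE s R q) (u : m → {i // i ∈ s} →₀ ℕ)
    (v : n → {i // i ∉ s} →₀ ℕ) :
    (Matrix.of fun r c => coeff ((u r).piecewise (v c)) q).rank ≤ R := by
  obtain ⟨ι, _, a, b, hcard, ha, hb, rfl⟩ := h
  have factorization : (Matrix.of fun r c => coeff ((u r).piecewise (v c)) (∑ i, a i * b i)) =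
      Matrix.of (fun r i => coeff (u r).extendDomain (a i)) *
        Matrix.of fun i c => coeff (v c).extendDomain (b i) := by
    ext r c
    simp only [Matrix.of_apply, Matrix.mul_apply, coeff_sum, coeff_piecewise_mul (ha _) (hb _)]
  rw [factorization]
  exact (Matrix.rank_mul_le_left _ _).trans ((Matrix.rank_le_card_width _).trans hcard)

theorem algHom_mem_of_mem_supported {A : Type*} [Semiring A] [Algebra K A]
    (φ : MvPolynomial σ K →ₐ[K] A) {S : Subalgebra K A} (hφ : ∀ i ∈ s, φ (X i) ∈ S)
    (hq : q ∈ supported K s) : φ q ∈ S := by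
  have hle : supported K s ≤ S.comap φ := Algebra.adjoin_le (Set.image_subset_iff.2 hφ)
  exact hle hq

theorem SeparationRankLE.bind₁ (h : SeparationRankLE s R q) {f : σ → MvPolynomial τ K} {t : Set τ}
    (hf : ∀ i ∈ s, f i ∈ supported K t) (hf' : ∀ i ∉ s, f i ∈ supported K tᶜ) :
    SeparationRankLE t R (bind₁ f q) := by
  obtain ⟨ι, hι, a, b, hcard, ha, hb, rfl⟩ := h
  refine ⟨ι, hι, fun i => MvPolynomial.bind₁ f (a i), fun i => MvPolynomial.bind₁ f (b i), hcard,
    fun i => ?_, fun i => ?_, by simp only [map_sum, map_mul]⟩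
  · exact algHom_mem_of_mem_supported _ (by simpa only [bind₁_X_right] using hf) (ha i)
  · exact algHom_mem_of_mem_supported _ (by simpa only [Set.mem_compl_iff, bind₁_X_right] using hf')
      (hb i)

section Isolate

variable [DecidableEq σ]

/-- `q` viewed as a univariate polynomial in `X x`. The coefficients are kept in the full ring
`MvPolynomial σ K`, although `X x` does not occur in them. -/
noncomputable def isolate (x : σ) : MvPolynomial σ K →ₐ[K] Polynomial (MvPolynomial σ K) :=
  aeval (Function.update (fun i => Polynomial.C (X i)) x Polynomial.X)

theorem isolate_X_self : isolate x (X x : MvPolynomial σ K) = Polynomial.X := by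
  simp [isolate]

theorem isolate_X_of_ne {i : σ} (hi : i ≠ x) :
    isolate x (X i : MvPolynomial σ K) = Polynomial.C (X i) := by
  simp [isolate, hi]

theorem eval_isolate (x : σ) (q : MvPolynomial σ K) : (isolate x q).eval (X x) = q := by
  have hid : ((Polynomial.aeval (X x)).restrictScalars K).comp (isolate x) =
      AlgHom.id K (MvPolynomial σ K) := by
    refine algHom_ext fun i => ?_
    obtain rfl | hi := eq_or_ne i x
    · simp [isolate_X_self]
    · simp [isolate_X_of_ne hi]
  simpa using DFunLike.congr_fun hid q

theorem natDegree_isolate_le (x : σ) (q : MvPolynomial σ K) :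
    (isolate x q).natDegree ≤ degreeOf x q := by
  rw [isolate, aeval_def, eval₂_eq]
  refine Polynomial.natDegree_sum_le_of_forall_le _ _ fun m hm => ?_
  calc (Polynomial.C (C (coeff m q)) * ∏ i ∈ m.support,
          Function.update (fun i => Polynomial.C (X i)) x Polynomial.X i ^ m i).natDegree
      ≤ ∑ i ∈ m.support, if i = x then m i else 0 := by
        refine (Polynomial.natDegree_C_mul_le _ _).trans
          ((Polynomial.natDegree_prod_le _ _).trans (Finset.sum_le_sum fun i _ => ?_))
        obtain rfl | hi := eq_or_ne i x
        · simpa using Polynomial.natDegree_X_pow_le (m i)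
        · simp [hi, ← map_pow]
    _ ≤ m x := by rw [Finset.sum_ite_eq']; split_ifs <;> simp
    _ ≤ degreeOf x q := monomial_le_degreeOf x hm

theorem coeff_isolate_mem_supported (hq : q ∈ supported K s) (n : ℕ) :
    (isolate x q).coeff n ∈ supported K (s \ {x}) := by
  let S := (Polynomial.mapAlgHom (supported K (s \ {x})).val).range
  have hS : isolate x q ∈ S := by
    refine algHom_mem_of_mem_supported _ (fun i hi => ?_) hq
    obtain rfl | hne := eq_or_ne i x
    · exact ⟨Polynomial.X, by simp [isolate_X_self]⟩
    · exact ⟨Polynomial.C ⟨X i, X_mem_supported_of_mem ⟨hi, hne⟩⟩, by simp [isolate_X_of_ne hne]⟩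
  obtain ⟨r, hr⟩ := hS
  rw [← hr]
  simp

theorem isolate_of_mem_supported (hx : x ∉ s) (hq : q ∈ supported K s) :
    isolate x q = Polynomial.C q := by
  have hX : Set.EqOn (isolate x) (Polynomial.CAlgHom : MvPolynomial σ K →ₐ[K] _) (X '' s) := by
    rintro _ ⟨i, hi, rfl⟩
    exact isolate_X_of_ne (ne_of_mem_of_not_mem hi hx)
  exact AlgHom.eqOn_adjoin_iff.2 hX hq

end Isolate

theorem SeparationRankLE.sdiff_singleton (h : SeparationRankLE s R q) (hx : x ∈ s)
    (hD : degreeOf x q ≤ D) : SeparationRankLE (s \ {x}) (R * (D + 1)) q := by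
  classical
  obtain ⟨ι, hι, a, b, hcard, ha, hb, hq⟩ := h
  have hcoeff (n : ℕ) : (isolate x q).coeff n = ∑ i, (isolate x (a i)).coeff n * b i := by
    simp only [hq, map_sum, map_mul, Polynomial.finsetSum_coeff,
      isolate_of_mem_supported (Set.notMem_compl_iff.2 hx) (hb _), Polynomial.coeff_mul_C]
  -- The degrees of the `a i` may exceed `D`, but only exponents occurring in `q` contribute.
  have hdeg : (isolate x q).natDegree < D + 1 :=
    Nat.lt_succ_of_le ((natDegree_isolate_le x q).trans hD)
  refine ⟨ι × Fin (D + 1), inferInstance, fun i => (isolate x (a i.1)).coeff i.2,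
    fun i => b i.1 * X x ^ (i.2 : ℕ), ?_, fun i => coeff_isolate_mem_supported (ha i.1) _,
    fun i => ?_, ?_⟩
  · simpa using Nat.mul_le_mul_right (D + 1) hcard
  · exact mul_mem (supported_mono (Set.compl_subset_compl.2 Set.sdiff_subset) (hb i.1))
      (pow_mem (X_mem_supported_of_mem fun hmem => hmem.2 rfl) _)
  · calc q = (isolate x q).eval (X x) := (eval_isolate x q).symm
      _ = ∑ n : Fin (D + 1), (isolate x q).coeff n * X x ^ (n : ℕ) := by
        rw [Polynomial.eval_eq_sum_range' hdeg, Finset.sum_range]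
      _ = ∑ i : ι × Fin (D + 1), (isolate x (a i.1)).coeff i.2 * (b i.1 * X x ^ (i.2 : ℕ)) := by
        simp only [hcoeff, Finset.sum_mul, mul_assoc, Fintype.sum_prod_type_right]

end SeparationRank

section Degree

variable {σ τ K : Type*} [CommSemiring K]

theorem degreeOf_X_le [DecidableEq σ] (j i : σ) :
    degreeOf j (X i : MvPolynomial σ K) ≤ if j = i then 1 else 0 := by
  cases subsingleton_or_nontrivial K
  · simp [Subsingleton.elim (X i : MvPolynomial σ K) 0]
  · exact (degreeOf_X j i).le

theorem degreeOf_prod_X_le (j : σ) (t : Finset σ) :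
    degreeOf j (∏ i ∈ t, X i : MvPolynomial σ K) ≤ 1 := by
  classical
  calc degreeOf j (∏ i ∈ t, X i : MvPolynomial σ K)
      ≤ ∑ i ∈ t, if j = i then 1 else 0 :=
        (degreeOf_prod_le _ _ _).trans (Finset.sum_le_sum fun i _ => degreeOf_X_le j i)
    _ ≤ 1 := by rw [Finset.sum_ite_eq]; split_ifs <;> simp

theorem degreeOf_bind₁_le [Fintype σ] (f : σ → MvPolynomial τ K) (q : MvPolynomial σ K) (j : τ) :
    degreeOf j (bind₁ f q) ≤ ∑ i, degreeOf i q * degreeOf j (f i) := by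
  rw [bind₁, aeval_def, eval₂_eq']
  refine (degreeOf_sum_le _ _ _).trans (Finset.sup_le fun m hm => ?_)
  calc degreeOf j (C (coeff m q) * ∏ i, f i ^ m i)
      ≤ ∑ i, degreeOf j (f i ^ m i) :=
        (degreeOf_C_mul_le _ _ _).trans (degreeOf_prod_le _ _ _)
    _ ≤ ∑ i, degreeOf i q * degreeOf j (f i) := Finset.sum_le_sum fun i _ =>
        (degreeOf_pow_le _ _ _).trans (Nat.mul_le_mul_right _ (monomial_le_degreeOf i hm))

variable [Fintype τ] (A : Matrix σ τ K)

theorem degreeOf_toMvPolynomial_le [DecidableEq K] (i : σ) (j : τ) :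
    degreeOf j (A.toMvPolynomial i) ≤ if A i j ≠ 0 then 1 else 0 := by
  classical
  refine (degreeOf_sum_le _ _ _).trans (Finset.sup_le fun l _ => ?_)
  rw [← C_mul_X_eq_monomial]
  split_ifs with hij
  · exact (degreeOf_C_mul_le _ _ _).trans ((degreeOf_X_le j l).trans (by split_ifs <;> simp))
  · obtain rfl | hl := eq_or_ne j l
    · simp [not_not.1 hij]
    · exact (degreeOf_C_mul_le _ _ _).trans ((degreeOf_X_le j l).trans_eq (if_neg hl))

theorem degreeOf_bind₁_toMvPolynomial_le [Fintype σ] [DecidableEq K] {q : MvPolynomial σ K} {D : ℕ}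
    (hq : ∀ i, degreeOf i q ≤ D) (j : τ) :
    degreeOf j (bind₁ A.toMvPolynomial q) ≤ Finset.card {i | A i j ≠ 0} * D :=
  calc degreeOf j (bind₁ A.toMvPolynomial q)
      ≤ ∑ i, degreeOf i q * degreeOf j (A.toMvPolynomial i) := degreeOf_bind₁_le _ _ _
    _ ≤ ∑ i, D * if A i j ≠ 0 then 1 else 0 := Finset.sum_le_sum fun i _ =>
        Nat.mul_le_mul (hq i) (degreeOf_toMvPolynomial_le A i j)
    _ = Finset.card {i | A i j ≠ 0} * D := by
        rw [← Finset.mul_sum, Finset.sum_boole, Nat.cast_id, mul_comm]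

end Degree

section Layer

variable {σ K : Type*} [Zero K] {A : Matrix σ σ K}

/-- No nonzero entry of `A` links an index in `s` to an index outside `s`, so that `A` is block
diagonal for the partition of the indices into `s` and `sᶜ`. -/
def IsDecoupledAt (A : Matrix σ σ K) (s : Set σ) : Prop :=
  ∀ ⦃i j⦄, A i j ≠ 0 → (i ∈ s ↔ j ∈ s)

/-- `A` is block diagonal with consecutive blocks of size at most `2`, expressed through cuts: no
block straddles both of two neighbouring cuts, the one just below an index `x` and the one just
above it. -/
def IsTwoBlockDiagonal [Preorder σ] (A : Matrix σ σ K) : Prop :=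
  ∀ x, IsDecoupledAt A (Set.Iio x) ∨ IsDecoupledAt A (Set.Iic x)

theorem isDecoupledAt_univ (A : Matrix σ σ K) : IsDecoupledAt A Set.univ := by
  simp [IsDecoupledAt]

theorem IsTwoBlockDiagonal.card_column_le [LinearOrder σ] [Fintype σ] [DecidableEq K]
    (hA : IsTwoBlockDiagonal A) (j : σ) : Finset.card {i | A i j ≠ 0} ≤ 2 := by
  by_contra! hcard
  -- With three rows, column `j` would link the two sides of both the cut just below and the cut
  -- just above the middle row.
  let row := Finset.orderEmbOfCardLe {i | A i j ≠ 0} hcard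
  have hrow (t : Fin 3) : A (row t) j ≠ 0 :=
    (Finset.mem_filter.1 (Finset.orderEmbOfCardLe_mem _ hcard t)).2
  have h01 : row 0 < row 1 := row.strictMono (by decide)
  have h12 : row 1 < row 2 := row.strictMono (by decide)
  obtain h | h := hA (row 1)
  · exact lt_irrefl _ (((h (hrow 1)).trans (h (hrow 0)).symm).2 h01)
  · exact h12.not_ge (((h (hrow 2)).trans (h (hrow 1)).symm).2 le_rfl)

end Layer

section Circuit

variable {σ K : Type*} [CommSemiring K] [Fintype σ]

theorem IsDecoupledAt.separationRankLE {A : Matrix σ σ K} {s : Set σ} (hA : IsDecoupledAt A s)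
    {R : ℕ} {q : MvPolynomial σ K} (hq : SeparationRankLE s R q) :
    SeparationRankLE s R (bind₁ A.toMvPolynomial q) :=
  hq.bind₁
    (fun _ hi => toMvPolynomial_mem_supported fun _ hj => by_contra fun h => hj ((hA h).1 hi))
    (fun _ hi => toMvPolynomial_mem_supported fun _ hj =>
      by_contra fun h => hi ((hA h).2 (Set.notMem_compl_iff.1 hj)))

/-- The state produced from `∏ j, X j` by a circuit with the given layers, the head of the list
acting first. -/
noncomputable def circuitState (layers : List (Matrix σ σ K)) : MvPolynomial σ K :=
  layers.foldl (fun q A => bind₁ A.toMvPolynomial q) (∏ j, X j)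

theorem circuitState_append_singleton (layers : List (Matrix σ σ K)) (A : Matrix σ σ K) :
    circuitState (layers ++ [A]) = bind₁ A.toMvPolynomial (circuitState layers) :=
  List.foldl_append

variable [LinearOrder σ] {layers : List (Matrix σ σ K)}

theorem degreeOf_circuitState_le (hlayers : ∀ A ∈ layers, IsTwoBlockDiagonal A) (j : σ) :
    degreeOf j (circuitState layers) ≤ 2 ^ layers.length := by
  classical
  induction layers using List.reverseRecOn generalizing j with
  | nil => exact degreeOf_prod_X_le j _
  | append_singleton layers A ih =>
    have hA : IsTwoBlockDiagonal A := hlayers A (by simp)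
    rw [circuitState_append_singleton, List.length_append, List.length_singleton, pow_succ']
    exact (degreeOf_bind₁_toMvPolynomial_le A
      (ih fun B hB => hlayers B (List.mem_append_left _ hB)) j).trans
        (Nat.mul_le_mul_right _ (hA.card_column_le j))

theorem separationRankLE_circuitState (hlayers : ∀ A ∈ layers, IsTwoBlockDiagonal A) {s : Set σ}
    (hs : IsLowerSet s) :
    SeparationRankLE s (∏ i ∈ Finset.Icc 1 layers.length, (2 ^ i + 1)) (circuitState layers) := by
  induction layers using List.reverseRecOn generalizing s with
  | nil => exact separationRankLE_prod_X s _
  | append_singleton layers A ih =>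
    have hdeg := degreeOf_circuitState_le hlayers
    rw [List.length_append, List.length_singleton] at hdeg ⊢
    rw [circuitState_append_singleton] at hdeg ⊢
    rw [Finset.prod_Icc_succ_top (Nat.le_add_left 1 _)]
    have preserved {t : Set σ} (ht : IsLowerSet t) (hAt : IsDecoupledAt A t) :=
      hAt.separationRankLE (ih (fun B hB => hlayers B (List.mem_append_left _ hB)) ht)
    have hmono := Nat.le_mul_of_pos_right (∏ i ∈ Finset.Icc 1 layers.length, (2 ^ i + 1))
      (Nat.succ_pos (2 ^ (layers.length + 1)))
    obtain rfl | ⟨x, rfl⟩ := hs.eq_univ_or_Iio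
    · exact (preserved hs (isDecoupledAt_univ A)).mono hmono
    obtain hA | hA := hlayers A (by simp) x
    · exact (preserved hs hA).mono hmono
    · rw [← Set.Iic_sdiff_right]
      exact (preserved (isLowerSet_Iic x) hA).sdiff_singleton Set.self_mem_Iic (hdeg x)

theorem schmidt_rank_bound_general [StrongRankCondition K]
    (hlayers : ∀ A ∈ layers, IsTwoBlockDiagonal A) {s : Set σ} [DecidablePred (· ∈ s)]
    (hs : IsLowerSet s) {m n : Type*} [Fintype n] (M : Matrix m n K)
    (u : m → {i // i ∈ s} → ℕ) (v : n → {i // i ∉ s} → ℕ)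
    (hM : ∀ row col, M row col = coeff (Finsupp.equivFunOnFinite.symm fun i =>
      if h : i ∈ s then u row ⟨i, h⟩ else v col ⟨i, h⟩) (circuitState layers)) :
    M.rank ≤ ∏ i ∈ Finset.Icc 1 layers.length, (2 ^ i + 1) := by
  convert (separationRankLE_circuitState hlayers hs).rank_le
    (fun row => Finsupp.equivFunOnFinite.symm (u row))
    (fun col => Finsupp.equivFunOnFinite.symm (v col)) using 2
  ext row col
  rw [hM, Matrix.of_apply]
  congr 1
  ext i
  simp

end Circuit

theorem Phi_eq_bind₁ {N : ℕ} (A : Matrix (Fin N) (Fin N) ℂ) :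
    Phi A = bind₁ A.toMvPolynomial := by
  simp only [Phi, C_mul_X_eq_monomial]
  rfl

theorem BlockDiag2.isTwoBlockDiagonal {N : ℕ} {F : Matrix (Fin N) (Fin N) ℂ}
    (hF : BlockDiag2 F) : IsTwoBlockDiagonal F := by
  obtain ⟨S, -, hS, hzero⟩ := hF
  have hblock {i j : Fin N} (hij : F i j ≠ 0) : i = j ∨
      ∃ k ∈ S, ((i : ℕ) = k ∧ (j : ℕ) = k + 1) ∨ ((i : ℕ) = k + 1 ∧ (j : ℕ) = k) := by
    by_contra h
    rw [not_or] at h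
    exact hij (hzero i j h.1 fun k hk hkij => h.2 ⟨k, hk, hkij⟩)
  intro x
  by_cases hx : (x : ℕ) ∈ S
  · left
    intro i j hij
    obtain rfl | ⟨k, hk, hk'⟩ := hblock hij
    · rfl
    · have : k + 1 ≠ x := fun h => hS k hk (h ▸ hx)
      simp only [Set.mem_Iio, Fin.lt_def]
      omega
  · right
    intro i j hij
    obtain rfl | ⟨k, hk, hk'⟩ := hblock hij
    · rfl
    · have : k ≠ x := ne_of_mem_of_not_mem hk hx
      simp only [Set.mem_Iic, Fin.le_def]
      omega

/-- Schmidt rank bound: the coefficient matricization of the state produced by a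
depth-`L` circuit of block diagonal gates, across any cut `k`, has rank at most
`∏_{i=1}^{L} (2^i + 1)`. -/
theorem schmidt_rank_bound (N L k : ℕ) (hk : 1 ≤ k) (hkN : k < N)
    (F : Fin L → Matrix (Fin N) (Fin N) ℂ) (hF : ∀ l, BlockDiag2 (F l))
    (p : MvPolynomial (Fin N) ℂ)
    (hp : p = (List.ofFn F).foldl (fun q G => Phi G q) (∏ j, X j))
    (M : Matrix (Fin k → Fin (2 ^ L + 1)) (Fin (N - k) → Fin (2 ^ L + 1)) ℂ)
    (hM : ∀ row col,
      M row col =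
        coeff (Finsupp.equivFunOnFinite.symm fun i : Fin N =>
          if h : (i : ℕ) < k then (row ⟨i, h⟩ : ℕ)
          else (col ⟨(i : ℕ) - k, by have := i.isLt; omega⟩ : ℕ)) p) :
    M.rank ≤ ∏ i ∈ Finset.Icc 1 L, (2 ^ i + 1) := by
  have hlayers : ∀ A ∈ List.ofFn F, IsTwoBlockDiagonal A := by
    simpa only [List.forall_mem_ofFn_iff] using fun l => (hF l).isTwoBlockDiagonal
  have hp_circuit : p = circuitState (List.ofFn F) := by simp only [hp, Phi_eq_bind₁, circuitState]
  rw [hp_circuit] at hM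
  have hcut : IsLowerSet {i : Fin N | (i : ℕ) < k} :=
    fun _ _ hle hlt => (Fin.le_def.1 hle).trans_lt hlt
  simpa only [List.length_ofFn] using schmidt_rank_bound_general hlayers hcut M
    (fun row i => row ⟨i, i.2⟩)
    (fun col i => col ⟨i - k, Nat.sub_lt_sub_right (not_lt.1 i.2) i.1.2⟩) hM
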